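/- Define K : ℝ × ℝ → ℝ by K(x, y) = 1 + (x − 1/2)(y − 1/2) + (|x − y|² − |x − y| + 1/6)/2. Fix an integer n ≥ 2 and define weights w*_0 = 6n²/(12n³ + n + 3), w*_k = 12n²/(12n³ + n + 3) for 1 ≤ k ≤ n − 2, and w*_{n-1} = 18n²/(12n³ + n + 3). Then for every ℓ ∈ {0, 1, …, n − 1}, ∑_{k=0}^{n-1} w*_k K(ℓ/n, k/n) = 1. -/

import Mathlib

/-- The reproducing kernel `K^1_{1,1}` of the first-order unweighted Sobolev
space on `[0,1]`. -/
noncomputable def sobKernel (x y : ℝ) : ℝ :=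
  1 + (x - 1/2) * (y - 1/2) + (|x - y| ^ 2 - |x - y| + 1/6) / 2

/-- The optimal kernel cubature weights for the left-Riemann nodes `t_k = k/n`. -/
noncomputable def wstar (n k : ℕ) : ℝ :=
  if k = 0 then 6 * (n : ℝ) ^ 2 / (12 * (n : ℝ) ^ 3 + n + 3)
  else if k = n - 1 then 18 * (n : ℝ) ^ 2 / (12 * (n : ℝ) ^ 3 + n + 3)
  else 12 * (n : ℝ) ^ 2 / (12 * (n : ℝ) ^ 3 + n + 3)

/-!
For all real `x` and `y` the kernel equals `4/3 + (x² + y²)/2 - max x y`. Hence, between two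
consecutive nodes `a ≤ b`, the weighted kernel sum increases by `b - a` times the difference between
`(a + b)/2` times the total weight and the weight of the nodes up to `a`. The weights `w*` are
proportional to `1/2, 1, …, 1, 3/2`, so their partial sums are exactly the midpoints of consecutive
nodes times the total weight. The kernel sum is therefore the same at every node, and its value at
the node `0` is a sum of a quadratic polynomial, which the common denominator of the weights
normalizes to `1`.
-/

section Kernel

theorem sobKernel_eq_sub_max (x y : ℝ) :
    sobKernel x y = 4 / 3 + (x ^ 2 + y ^ 2) / 2 - max x y := by
  rw [sobKernel, sq_abs]
  linarith [max_add_min x y, max_sub_min_eq_abs' x y]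

variable {t : ℕ → ℝ}

theorem sobKernel_succ_sub (ht : Monotone t) (l k : ℕ) :
    sobKernel (t (l + 1)) (t k) - sobKernel (t l) (t k) =
      (t (l + 1) - t l) * ((t l + t (l + 1)) / 2 - if k < l + 1 then 1 else 0) := by
  simp only [sobKernel_eq_sub_max]
  split_ifs with hk
  · rw [max_eq_left (ht hk.le), max_eq_left (ht (Nat.le_of_lt_succ hk))]
    ring
  · have hlk : l + 1 ≤ k := not_lt.mp hk
    rw [max_eq_right (ht hlk), max_eq_right (ht (Nat.le_of_succ_le hlk))]
    ring

theorem sum_mul_sobKernel_succ_sub (ht : Monotone t) (w : ℕ → ℝ) {l n : ℕ} (hl : l < n) :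
    ∑ k ∈ Finset.range n, w k * sobKernel (t (l + 1)) (t k) -
        ∑ k ∈ Finset.range n, w k * sobKernel (t l) (t k) =
      (t (l + 1) - t l) * ((t l + t (l + 1)) / 2 * ∑ k ∈ Finset.range n, w k -
        ∑ k ∈ Finset.range (l + 1), w k) := by
  have hfilter : (Finset.range n).filter (· < l + 1) = Finset.range (l + 1) := by
    grind
  calc
    _ = ∑ k ∈ Finset.range n, (t (l + 1) - t l) *
          ((t l + t (l + 1)) / 2 * w k - if k < l + 1 then w k else 0) := by
      rw [← Finset.sum_sub_distrib]
      refine Finset.sum_congr rfl fun k _ ↦ ?_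
      rw [← mul_sub, sobKernel_succ_sub ht]
      split_ifs <;> ring
    _ = _ := by
      rw [← Finset.mul_sum, Finset.sum_sub_distrib, ← Finset.mul_sum, ← Finset.sum_filter,
        hfilter]

theorem sum_mul_sobKernel_eq_of_sum_eq_midpoint_mul (ht : Monotone t) {w : ℕ → ℝ} {n : ℕ}
    (hw : ∀ l, l + 1 < n → ∑ k ∈ Finset.range (l + 1), w k =
      (t l + t (l + 1)) / 2 * ∑ k ∈ Finset.range n, w k) {l : ℕ} (hl : l < n) :
    ∑ k ∈ Finset.range n, w k * sobKernel (t l) (t k) =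
      ∑ k ∈ Finset.range n, w k * sobKernel (t 0) (t k) := by
  induction l with
  | zero => rfl
  | succ l ih =>
    rw [← ih (Nat.lt_of_succ_lt hl), ← sub_eq_zero,
      sum_mul_sobKernel_succ_sub ht w (Nat.lt_of_succ_lt hl), hw l hl, sub_self, mul_zero]

end Kernel

section PowerSums

variable {K : Type*} [Field K] [CharZero K]

theorem sum_range_cast_eq (n : ℕ) : ∑ k ∈ Finset.range n, (k : K) = n * (n - 1) / 2 := by
  induction n with
  | zero => simp
  | succ n ih =>
    rw [Finset.sum_range_succ, ih]
    push_cast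
    ring

theorem sum_range_cast_sq_eq (n : ℕ) :
    ∑ k ∈ Finset.range n, (k : K) ^ 2 = n * (n - 1) * (2 * n - 1) / 6 := by
  induction n with
  | zero => simp
  | succ n ih =>
    rw [Finset.sum_range_succ, ih]
    push_cast
    ring

end PowerSums

section Weights

variable {n : ℕ}

theorem wstar_eq_mul_endpoint_correction (hn : 2 ≤ n) (k : ℕ) :
    wstar n k = 12 * (n : ℝ) ^ 2 / (12 * (n : ℝ) ^ 3 + n + 3) *
      (1 - (if k = 0 then 1 / 2 else 0) + if k = n - 1 then 1 / 2 else 0) := by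
  unfold wstar
  split_ifs
  · omega
  all_goals ring

theorem sum_wstar_mul (hn : 2 ≤ n) (g : ℕ → ℝ) :
    ∑ k ∈ Finset.range n, wstar n k * g k =
      12 * (n : ℝ) ^ 2 / (12 * (n : ℝ) ^ 3 + n + 3) *
        (∑ k ∈ Finset.range n, g k + (g (n - 1) - g 0) / 2) := by
  have h_first : 0 ∈ Finset.range n := Finset.mem_range.mpr (by omega)
  have h_last : n - 1 ∈ Finset.range n := Finset.mem_range.mpr (by omega)
  simp only [wstar_eq_mul_endpoint_correction hn, mul_assoc, ← Finset.mul_sum, add_mul, sub_mul,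
    one_mul, ite_mul, zero_mul, Finset.sum_add_distrib, Finset.sum_sub_distrib,
    Finset.sum_ite_eq', if_pos h_first, if_pos h_last]
  ring

theorem sum_wstar (hn : 2 ≤ n) :
    ∑ k ∈ Finset.range n, wstar n k = 12 * (n : ℝ) ^ 2 / (12 * (n : ℝ) ^ 3 + n + 3) * n := by
  simpa using sum_wstar_mul hn fun _ ↦ 1

theorem sum_range_succ_wstar {l : ℕ} (hl : l + 1 < n) :
    ∑ k ∈ Finset.range (l + 1), wstar n k =
      12 * (n : ℝ) ^ 2 / (12 * (n : ℝ) ^ 3 + n + 3) * (l + 1 / 2) := by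
  induction l with
  | zero =>
    rw [Finset.sum_range_one, wstar, if_pos rfl, Nat.cast_zero]
    ring
  | succ l ih =>
    rw [Finset.sum_range_succ, ih (Nat.lt_of_succ_lt hl), wstar, if_neg l.succ_ne_zero,
      if_neg (by omega)]
    push_cast
    ring

theorem sum_range_succ_wstar_eq_midpoint_mul {l : ℕ} (hl : l + 1 < n) :
    ∑ k ∈ Finset.range (l + 1), wstar n k =
      ((l : ℝ) / n + ((l + 1 : ℕ) : ℝ) / n) / 2 * ∑ k ∈ Finset.range n, wstar n k := by
  have hn0 : (n : ℝ) ≠ 0 := Nat.cast_ne_zero.mpr (by omega)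
  have hmid : ((l : ℝ) / n + ((l + 1 : ℕ) : ℝ) / n) / 2 * n = l + 1 / 2 := by
    push_cast
    field_simp
    ring
  rw [sum_range_succ_wstar hl, sum_wstar (by omega), mul_left_comm, hmid]

theorem sum_wstar_mul_sobKernel_zero (hn : 2 ≤ n) :
    ∑ k ∈ Finset.range n, wstar n k * sobKernel 0 ((k : ℝ) / n) = 1 := by
  have hn0 : (n : ℝ) ≠ 0 := Nat.cast_ne_zero.mpr (by omega)
  have hkernel (k : ℕ) : sobKernel 0 ((k : ℝ) / n) =
      4 / 3 + 1 / (2 * (n : ℝ) ^ 2) * (k : ℝ) ^ 2 - 1 / (n : ℝ) * k := by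
    rw [sobKernel_eq_sub_max, max_eq_right (by positivity)]
    ring
  have hsum : ∑ k ∈ Finset.range n, sobKernel 0 ((k : ℝ) / n) =
      4 / 3 * n + (n - 1) * (2 * n - 1) / (12 * n) - (n - 1) / 2 := by
    simp only [hkernel, Finset.sum_sub_distrib, Finset.sum_add_distrib, ← Finset.mul_sum,
      sum_range_cast_eq, sum_range_cast_sq_eq, Finset.sum_const, Finset.card_range, nsmul_eq_mul]
    field_simp
    ring
  rw [sum_wstar_mul hn fun k ↦ sobKernel 0 ((k : ℝ) / n), hsum, hkernel, hkernel,
    Nat.cast_pred (by omega), Nat.cast_zero]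
  field_simp
  ring

end Weights

/-- Section 3.1: the weights `w*` solve the Gram system
`∑_k w*_k K(ℓ/n, k/n) = 1` for all `ℓ ∈ {0, …, n−1}`. -/
theorem stmt_10 (n : ℕ) (hn : 2 ≤ n) (l : ℕ) (hl : l < n) :
    ∑ k ∈ Finset.range n, wstar n k * sobKernel ((l : ℝ) / n) ((k : ℝ) / n) = 1 := by
  have h_nodes : Monotone fun k : ℕ ↦ (k : ℝ) / n := fun _ _ _ ↦ by dsimp only; gcongr
  calc
    ∑ k ∈ Finset.range n, wstar n k * sobKernel ((l : ℝ) / n) ((k : ℝ) / n)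
    _ = ∑ k ∈ Finset.range n, wstar n k * sobKernel (((0 : ℕ) : ℝ) / n) ((k : ℝ) / n) :=
      sum_mul_sobKernel_eq_of_sum_eq_midpoint_mul h_nodes
        (fun _ ↦ sum_range_succ_wstar_eq_midpoint_mul) hl
    _ = 1 := by
      rw [Nat.cast_zero, zero_div]
      exact sum_wstar_mul_sobKernel_zero hn
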